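/- For 0 ≤ m ≤ n−1, the number of k-Dyck paths of size n with exactly m+1 peaks (occurrences of the pattern UD) equals (1/n) binomial(nk, m) binomial(n, n−m−1) (the generalized Runyon number). -/

import Mathlib

/-- A `k`-Dyck path of size `n`: `true` = up step `U`, `false` = down step `D`;
the path stays weakly above `y = x/k`. -/
def IsKDyckPath (k n : ℕ) (w : List Bool) : Prop :=
  w.count true = n ∧ w.count false = k * n ∧
  ∀ i, (w.take i).count false ≤ k * (w.take i).count true

/-- The number of peaks of a path: occurrences of the factor `UD`,
i.e. positions `i` with `w[i] = U` and `w[i+1] = D`. -/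
def numPeaks (w : List Bool) : ℕ :=
  ((Finset.range w.length).filter
    (fun i => w.getD i false = true ∧ w.getD (i + 1) true = false)).card

/-!
A `k`-Dyck path has exactly `k` times as many `D`s as `U`s, so the condition on its prefixes says
that every suffix has at least `k` times as many `D`s as `U`s. This passes to the tail of a word, so
the number `N u d p` of words with `u` letters `U`, `d` letters `D` and `p` peaks all of whose
suffixes satisfy it can be computed by removing first letters: for `k (u + 1) ≤ d + 1`,
`N (u + 1) (d + 1) (p + 1) + N u d (p + 1) =
  N (u + 1) d (p + 1) + N u d p + N u (d + 1) (p + 1)`.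
By Pascal's rule `C(d + 1, p) C(u - 1, p - 1) - k C(d, p - 1) C(u, p)` satisfies the same recursion.
By absorption it equals `(d + 1 - k u) / u * C(d, p - 1) C(u, p)`, so it also vanishes on the
boundary `d + 1 = k u`; at `d = k u` the first factor is `1 / u`.
-/

theorem numPeaks_cons (c : Bool) (w : List Bool) :
    numPeaks (c :: w) = numPeaks w + if c = true ∧ w.head? = some false then 1 else 0 := by
  unfold numPeaks
  rw [Finset.card_filter, Finset.card_filter, List.length_cons, Finset.sum_range_succ']
  congr 1
  cases w <;> simp

theorem numPeaks_le_count_true (w : List Bool) : numPeaks w ≤ w.count true := by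
  induction w with
  | nil => rfl
  | cons c w ih => cases c <;> grind [numPeaks_cons]

/-- The suffix form of the `k`-Dyck condition: every suffix has at least `k` times as many down
steps as up steps. Unlike the prefix form, it is inherited by the tail of a word and does not refer
to the size of the path. -/
def IsBallot (k : ℕ) (w : List Bool) : Prop :=
  ∀ v, v <:+ w → k * v.count true ≤ v.count false

theorem isBallot_cons {k : ℕ} {c : Bool} {w : List Bool} :
    IsBallot k (c :: w) ↔
      k * (c :: w).count true ≤ (c :: w).count false ∧ IsBallot k w := by
  simp only [IsBallot, List.suffix_cons_iff, forall_eq_or_imp]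

theorem IsBallot.mul_count_le {k : ℕ} {w : List Bool} (h : IsBallot k w) :
    k * w.count true ≤ w.count false :=
  h w List.suffix_rfl

theorem isBallot_of_count_true_eq_zero (k : ℕ) {w : List Bool} (hw : w.count true = 0) :
    IsBallot k w := fun v hv => by
  have hv0 : v.count true = 0 := Nat.le_zero.1 (hw ▸ hv.sublist.count_le true)
  simp [hv0]

theorem isBallot_false_cons {k : ℕ} {w : List Bool} :
    IsBallot k (false :: w) ↔ IsBallot k w := by
  rw [isBallot_cons, and_iff_right_iff_imp]
  intro h
  simpa using h.mul_count_le.trans (Nat.le_succ _)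

theorem IsBallot.numPeaks_pos {k : ℕ} (hk : 1 ≤ k) {w : List Bool} (h : IsBallot k w)
    (hw : 0 < w.count true) : 0 < numPeaks w := by
  induction w with
  | nil => simp at hw
  | cons c w ih =>
    obtain ⟨hcount, htail⟩ := isBallot_cons.1 h
    rw [numPeaks_cons]
    rcases Nat.eq_zero_or_pos (w.count true) with hzero | hpos
    · -- The first letter is the only `U`, and the ballot condition forces a `D` after it.
      match c, w with
      | false, w => simp [hzero] at hw
      | true, [] =>
        have hk0 : k ≤ 0 := by simpa using hcount
        omega
      | true, false :: w => simp
      | true, true :: w => simp at hzero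
    · exact Nat.add_pos_left (ih htail hpos) _

theorem isKDyckPath_iff_isBallot {k n : ℕ} {w : List Bool} :
    IsKDyckPath k n w ↔ IsBallot k w ∧ w.count true = n ∧ w.count false = k * n := by
  have prefix_iff_suffix {s v : List Bool} (hsum : (s ++ v).count false = k * (s ++ v).count true) :
      s.count false ≤ k * s.count true ↔ k * v.count true ≤ v.count false := by
    simp only [List.count_append, mul_add] at hsum
    omega
  constructor
  · rintro ⟨htrue, hfalse, hprefix⟩
    refine ⟨?_, htrue, hfalse⟩
    rintro v ⟨s, rfl⟩
    exact (prefix_iff_suffix (by rw [hfalse, htrue])).1 (by simpa using hprefix s.length)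
  · rintro ⟨hballot, htrue, hfalse⟩
    refine ⟨htrue, hfalse, fun i => ?_⟩
    refine (prefix_iff_suffix (v := w.drop i) ?_).2 (hballot _ (List.drop_suffix i w))
    rw [List.take_append_drop, hfalse, htrue]

/-- The words satisfying the ballot condition with `u` up steps, `d` down steps and `p` peaks. -/
def ballotWords (k u d p : ℕ) : Set (List Bool) :=
  {w | IsBallot k w ∧ w.count true = u ∧ w.count false = d ∧ numPeaks w = p}

/-- The members of `ballotWords k u d p` starting with an up step: putting `U` in front of such a
word does not create a peak. -/
def upBallotWords (k u d p : ℕ) : Set (List Bool) :=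
  {w | w ∈ ballotWords k u d p ∧ w.head? = some true}

section Recursion

variable {k u d p : ℕ}

theorem finite_ballotWords : (ballotWords k u d p).Finite := by
  refine (List.finite_length_eq Bool (u + d)).subset ?_
  rintro w ⟨-, rfl, rfl, -⟩
  exact (List.count_true_add_count_false w).symm

theorem false_cons_mem_ballotWords {w : List Bool} :
    false :: w ∈ ballotWords k u (d + 1) p ↔ w ∈ ballotWords k u d p := by
  simp [ballotWords, isBallot_false_cons, numPeaks_cons]

theorem true_cons_false_cons_mem_ballotWords (h : k * (u + 1) ≤ d + 1) {w : List Bool} :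
    true :: false :: w ∈ ballotWords k (u + 1) (d + 1) (p + 1) ↔ w ∈ ballotWords k u d p := by
  have hballot (htrue : w.count true = u) (hfalse : w.count false = d) :
      IsBallot k (true :: false :: w) ↔ IsBallot k w := by
    rw [isBallot_cons, isBallot_false_cons, and_iff_right]
    simpa [htrue, hfalse] using h
  simpa [ballotWords, numPeaks_cons] using fun htrue hfalse _ => hballot htrue hfalse

theorem true_cons_true_cons_mem_ballotWords (h : k * (u + 1) ≤ d) {w : List Bool} :
    true :: true :: w ∈ ballotWords k (u + 1) d p ↔ true :: w ∈ ballotWords k u d p := by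
  have hballot (htrue : (true :: w).count true = u) (hfalse : w.count false = d) :
      IsBallot k (true :: true :: w) ↔ IsBallot k (true :: w) := by
    rw [isBallot_cons, and_iff_right]
    simpa [← htrue, hfalse] using h
  simpa [ballotWords, numPeaks_cons] using fun htrue hfalse _ => hballot (by simpa) hfalse

theorem ballotWords_succ_down :
    ballotWords k u (d + 1) p =
      List.cons false '' ballotWords k u d p ∪ upBallotWords k u (d + 1) p := by
  ext w
  match w with
  | [] => simp [ballotWords, upBallotWords]
  | false :: w => simp [upBallotWords, false_cons_mem_ballotWords]
  | true :: w => simp [upBallotWords]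

theorem upBallotWords_succ (h : k * (u + 1) ≤ d + 1) :
    upBallotWords k (u + 1) (d + 1) (p + 1) =
      List.cons true ''
        (List.cons false '' ballotWords k u d p ∪ upBallotWords k u (d + 1) (p + 1)) := by
  ext w
  match w with
  | [] => simp [upBallotWords]
  | false :: w => simp [upBallotWords]
  | [true] => simp [upBallotWords, ballotWords]
  | true :: false :: w => simp [upBallotWords, true_cons_false_cons_mem_ballotWords h]
  | true :: true :: w => simp [upBallotWords, true_cons_true_cons_mem_ballotWords h]

theorem ncard_image_cons_false_union_upBallotWords {s : Set (List Bool)} (hs : s.Finite) :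
    (List.cons false '' s ∪ upBallotWords k u d p).ncard =
      s.ncard + (upBallotWords k u d p).ncard := by
  have hdisj : Disjoint (List.cons false '' s) (upBallotWords k u d p) := by
    rw [Set.disjoint_left]
    rintro _ ⟨v, -, rfl⟩ ⟨-, hhead⟩
    simp at hhead
  rw [Set.ncard_union_eq hdisj (hs.image _) (finite_ballotWords.subset fun _ hw => hw.1),
    Set.ncard_image_of_injective _ List.cons_injective]

theorem ncard_ballotWords_succ_down :
    (ballotWords k u (d + 1) p).ncard =
      (ballotWords k u d p).ncard + (upBallotWords k u (d + 1) p).ncard := by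
  rw [ballotWords_succ_down, ncard_image_cons_false_union_upBallotWords finite_ballotWords]

theorem ncard_upBallotWords_succ (h : k * (u + 1) ≤ d + 1) :
    (upBallotWords k (u + 1) (d + 1) (p + 1)).ncard =
      (ballotWords k u d p).ncard + (upBallotWords k u (d + 1) (p + 1)).ncard := by
  rw [upBallotWords_succ h, Set.ncard_image_of_injective _ List.cons_injective,
    ncard_image_cons_false_union_upBallotWords finite_ballotWords]

theorem ncard_ballotWords_succ (h : k * (u + 1) ≤ d + 1) :
    (ballotWords k (u + 1) (d + 1) (p + 1)).ncard + (ballotWords k u d (p + 1)).ncard =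
      (ballotWords k (u + 1) d (p + 1)).ncard + (ballotWords k u d p).ncard +
        (ballotWords k u (d + 1) (p + 1)).ncard := by
  rw [ncard_ballotWords_succ_down, ncard_upBallotWords_succ h,
    ncard_ballotWords_succ_down (u := u)]
  ring

end Recursion

theorem ballotWords_eq_empty_of_lt {k u d : ℕ} (h : d < k * u) (p : ℕ) :
    ballotWords k u d p = ∅ := by
  rw [Set.eq_empty_iff_forall_notMem]
  rintro w ⟨hballot, rfl, rfl, -⟩
  exact h.not_ge hballot.mul_count_le

theorem ballotWords_succ_up_zero_peaks {k : ℕ} (hk : 1 ≤ k) (u d : ℕ) :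
    ballotWords k (u + 1) d 0 = ∅ := by
  rw [Set.eq_empty_iff_forall_notMem]
  rintro w ⟨hballot, htrue, -, hpeaks⟩
  exact (hballot.numPeaks_pos hk (htrue ▸ u.succ_pos)).ne' hpeaks

theorem ballotWords_zero_up_succ_peaks (k d p : ℕ) : ballotWords k 0 d (p + 1) = ∅ := by
  rw [Set.eq_empty_iff_forall_notMem]
  rintro w ⟨-, htrue, -, hpeaks⟩
  have := numPeaks_le_count_true w
  omega

theorem ballotWords_zero_up_zero_peaks (k d : ℕ) :
    ballotWords k 0 d 0 = {List.replicate d false} := by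
  ext w
  constructor
  · rintro ⟨-, htrue, rfl, -⟩
    refine List.eq_replicate_iff.2 ⟨?_, fun c hc => ?_⟩
    · rw [← List.count_true_add_count_false w, htrue, zero_add]
    · exact Bool.eq_false_iff.2 fun hc_true => List.count_eq_zero.1 htrue (hc_true ▸ hc)
  · rintro rfl
    have htrue : (List.replicate d false).count true = 0 := by simp [List.count_replicate]
    exact ⟨isBallot_of_count_true_eq_zero k htrue, htrue, List.count_replicate_self,
      Nat.le_zero.1 (htrue ▸ numPeaks_le_count_true _)⟩

/-- The closed form of `(ballotWords k u d p).ncard` in the range `k * u ≤ d + 1`. It takes values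
in `ℤ` because of the subtraction, and the cases `u = 0` and `p = 0` are separated because the
general formula involves `u - 1` and `p - 1`. -/
def ballotNumber (k : ℕ) : ℕ → ℕ → ℕ → ℤ
  | 0, _, 0 => 1
  | 0, _, _ + 1 => 0
  | _ + 1, _, 0 => 0
  | u + 1, d, p + 1 =>
    (d + 1).choose (p + 1) * u.choose p - k * d.choose p * (u + 1).choose (p + 1)

theorem ballotNumber_succ (k u d p : ℕ) :
    ballotNumber k (u + 1) (d + 1) (p + 1) + ballotNumber k u d (p + 1) =
      ballotNumber k (u + 1) d (p + 1) + ballotNumber k u d p +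
        ballotNumber k u (d + 1) (p + 1) := by
  rcases u with _ | u <;> rcases p with _ | p <;>
    simp only [ballotNumber, Nat.choose_succ_succ', Nat.choose_zero_right, Nat.choose_zero_succ] <;>
    push_cast <;> ring

theorem succ_mul_ballotNumber (k u d p : ℕ) :
    (u + 1) * ballotNumber k (u + 1) d (p + 1) =
      (d + 1 - k * (u + 1)) * d.choose p * (u + 1).choose (p + 1) := by
  have hd : ((d + 1) * d.choose p : ℤ) = (d + 1).choose (p + 1) * (p + 1) :=
    mod_cast Nat.add_one_mul_choose_eq d p
  have hu : ((u + 1) * u.choose p : ℤ) = (u + 1).choose (p + 1) * (p + 1) :=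
    mod_cast Nat.add_one_mul_choose_eq u p
  rw [ballotNumber]
  linear_combination ((d + 1).choose (p + 1) : ℤ) * hu - ((u + 1).choose (p + 1) : ℤ) * hd

theorem ballotNumber_eq_zero {k u d : ℕ} (h : d + 1 = k * (u + 1)) (p : ℕ) :
    ballotNumber k (u + 1) d (p + 1) = 0 := by
  have hz : (d + 1 - k * (u + 1) : ℤ) = 0 := sub_eq_zero.2 (mod_cast h)
  have hmul := succ_mul_ballotNumber k u d p
  rw [hz, zero_mul, zero_mul] at hmul
  exact (mul_eq_zero.1 hmul).resolve_left (by positivity)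

theorem ncard_ballotWords {k : ℕ} (hk : 1 ≤ k) {u d : ℕ} (p : ℕ) (h : k * u ≤ d + 1) :
    ((ballotWords k u d p).ncard : ℤ) = ballotNumber k u d p := by
  induction u generalizing d p with
  | zero =>
    cases p with
    | zero => simp [ballotWords_zero_up_zero_peaks, ballotNumber]
    | succ p => simp [ballotWords_zero_up_succ_peaks, ballotNumber]
  | succ u ih_up =>
    cases p with
    | zero => simp [ballotWords_succ_up_zero_peaks hk, ballotNumber]
    | succ p =>
      obtain ⟨r, hr⟩ := Nat.exists_eq_add_of_le h
      induction r generalizing d with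
      | zero =>
        have hlt : d < k * (u + 1) := by omega
        simp [ballotWords_eq_empty_of_lt hlt, ballotNumber_eq_zero hr]
      | succ r ih_down =>
        have hpos : 0 < k * (u + 1) := by positivity
        obtain ⟨d, rfl⟩ : ∃ e, d = e + 1 := ⟨d - 1, by omega⟩
        have hsucc : k * (u + 1) ≤ d + 1 := by omega
        have hup : k * u ≤ d + 1 := (Nat.mul_le_mul_left k u.le_succ).trans hsucc
        have hrec := congrArg (Nat.cast (R := ℤ)) (ncard_ballotWords_succ (p := p) hsucc)
        push_cast at hrec
        rw [ih_down hsucc (by omega), ih_up _ hup, ih_up _ hup, ih_up _ (Nat.le_succ_of_le hup)]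
          at hrec
        linarith [ballotNumber_succ k u d p]

/-- The number of `k`-Dyck paths of size `n` with exactly `m+1` peaks is the
generalized Runyon number `(1/n) C(nk, m) C(n, n-m-1)`. -/
theorem kDyck_peaks_runyon (k n m : ℕ) (hk : 1 ≤ k) (hn : 1 ≤ n) (hm : m + 1 ≤ n) :
    ({w : List Bool | IsKDyckPath k n w ∧ numPeaks w = m + 1}.ncard : ℚ)
      = (1 / (n : ℚ)) * ((n * k).choose m : ℚ) * (n.choose (n - m - 1) : ℚ) := by
  have hset : {w : List Bool | IsKDyckPath k n w ∧ numPeaks w = m + 1} =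
      ballotWords k n (k * n) (m + 1) := by
    simp only [ballotWords, isKDyckPath_iff_isBallot, and_assoc]
  obtain ⟨u, rfl⟩ : ∃ u, n = u + 1 := ⟨n - 1, by omega⟩
  have hmul : ((u + 1) * (ballotWords k (u + 1) (k * (u + 1)) (m + 1)).ncard : ℤ) =
      (k * (u + 1)).choose m * (u + 1).choose (m + 1) := by
    rw [ncard_ballotWords hk (m + 1) (Nat.le_succ _), succ_mul_ballotNumber]
    push_cast
    ring
  rw [hset, one_div, mul_assoc, eq_inv_mul_iff_mul_eq₀ (by positivity), Nat.sub_sub,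
    Nat.choose_symm hm, mul_comm (u + 1) k]
  exact_mod_cast hmul
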